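/- Let q < p ≤ −4 be real numbers. Suppose −|p|^{4/9}·|q|^{5/9} < r < −|p|^{5/9}·|q|^{4/9} and 0 < ε ≤ (100·|r|)^{−1} · min{ln(q/p), 1}. If −(1/2)·e^{ε} < h₁ < −(1/2)·e^{−ε} and ((2r+1)/(2+r))·e^{−ε} < h₂ < ((2r+1)/(2+r))·e^{ε}, then −|p|^{1/3}·|q|^{2/3} < (h₁ + h₂)/(1 + h₁·h₂) < −|p|^{2/3}·|q|^{1/3}. -/

import Mathlib

/-!
Write `x ⊕ y = (x + y) / (1 + x * y)` for the relativistic sum, so that `r = (-a) ⊕ (r ⊕ a)`. Where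
`|x| < 1 < y` and `1 + x * y < 0`, the sum is decreasing in `x` and increasing in `y`; hence on the
box of perturbations by factors between `exp (-ε)` and `exp ε` it is extremal where both arguments
are scaled by the same factor `exp (±ε)`. There the numerator cancels down to that of the
unperturbed sum, and the denominator moves by a relative error `O(|r| * ε)`. The gap between
`|p| ^ (4 / 9) * |q| ^ (5 / 9)` and `|p| ^ (1 / 3) * |q| ^ (2 / 3)` is a factor
`(q / p) ^ (1 / 9) ≥ 1 + log (q / p) / 9`, as is the one on the other side, and it absorbs this
error.
-/

open Real Set

section OrderedField

variable {K : Type*} [Field K]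

/-- The relativistic sum of velocities (the addition law of `tanh`), with the junk value `0` at
`x * y = -1`. -/
def velocitySum (x y : K) : K :=
  (x + y) / (1 + x * y)

theorem velocitySum_comm (x y : K) : velocitySum x y = velocitySum y x := by
  rw [velocitySum, velocitySum, add_comm x y, mul_comm x y]

theorem velocitySum_sub_velocitySum {x y y' : K} (h : 1 + x * y ≠ 0) (h' : 1 + x * y' ≠ 0) :
    velocitySum x y' - velocitySum x y =
      (y' - y) * (1 - x ^ 2) / ((1 + x * y') * (1 + x * y)) := by
  rw [velocitySum, velocitySum, div_sub_div _ _ h' h]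
  congr 1
  ring

theorem velocitySum_mul_mul (x y : K) {t : K} (ht : t ≠ 0) :
    velocitySum (x * t) (y * t) = (x + y) / (t⁻¹ + x * y * t) := by
  rw [velocitySum, ← mul_div_mul_right (x + y) _ ht]
  congr 1 <;> field_simp

theorem velocitySum_one_half [NeZero (2 : K)] (x : K) :
    velocitySum x (1 / 2) = (2 * x + 1) / (2 + x) := by
  rw [velocitySum, ← mul_div_mul_left _ _ (two_ne_zero' K)]
  congr 1 <;> field_simp

variable [LinearOrder K] [IsStrictOrderedRing K]

theorem velocitySum_lt_velocitySum_right {x y y' : K} (hx : x ^ 2 < 1) (hy : y < y')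
    (h : 0 < (1 + x * y') * (1 + x * y)) : velocitySum x y < velocitySum x y' := by
  rw [← sub_pos, velocitySum_sub_velocitySum (right_ne_zero_of_mul h.ne')
    (left_ne_zero_of_mul h.ne')]
  exact div_pos (mul_pos (sub_pos.2 hy) (sub_pos.2 hx)) h

theorem velocitySum_lt_velocitySum_left {x x' y : K} (hy : 1 < y ^ 2) (hx : x < x')
    (h : 0 < (1 + x' * y) * (1 + x * y)) : velocitySum x' y < velocitySum x y := by
  rw [mul_comm x', mul_comm x] at h
  rw [velocitySum_comm x', velocitySum_comm x, ← sub_neg,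
    velocitySum_sub_velocitySum (right_ne_zero_of_mul h.ne') (left_ne_zero_of_mul h.ne')]
  exact div_neg_of_neg_of_pos (mul_neg_of_pos_of_neg (sub_pos.2 hx) (sub_neg.2 hy)) h

theorem velocitySum_mem_Ioo {x x₀ x₁ y y₀ y₁ : K} (hx₀ : -1 < x₀) (hy₀ : 1 < y₀)
    (h : 1 + x₁ * y₀ < 0) (hx : x ∈ Ioo x₀ x₁) (hy : y ∈ Ioo y₀ y₁) :
    velocitySum x y ∈ Ioo (velocitySum x₁ y₀) (velocitySum x₀ y₁) := by
  obtain ⟨hx₀x, hxx₁⟩ := hx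
  obtain ⟨hy₀y, hyy₁⟩ := hy
  have hx₁ : x₁ < 0 := neg_of_mul_neg_left (by linarith) (by linarith : 0 ≤ y₀)
  have denom_neg {u v : K} (hu : u ≤ x₁) (hv : y₀ ≤ v) : 1 + u * v < 0 := by
    have : u * v ≤ x₁ * y₀ :=
      (mul_le_mul_of_nonneg_right hu (by linarith)).trans (mul_le_mul_of_nonpos_left hv hx₁.le)
    linarith
  have hx₀x₁ : x₀ ≤ x₁ := (hx₀x.trans hxx₁).le
  have sq_lt {u : K} (hu : x₀ ≤ u) (hu' : u ≤ x₁) : u ^ 2 < 1 :=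
    (sq_lt_one_iff_abs_lt_one u).2 (abs_lt.2 ⟨by linarith, by linarith⟩)
  have one_lt_sq : 1 < y ^ 2 := one_lt_pow₀ (hy₀.trans hy₀y) two_ne_zero
  constructor
  · calc velocitySum x₁ y₀
        < velocitySum x₁ y := velocitySum_lt_velocitySum_right (sq_lt hx₀x₁ le_rfl) hy₀y
          (mul_pos_of_neg_of_neg (denom_neg le_rfl hy₀y.le) h)
      _ < velocitySum x y := velocitySum_lt_velocitySum_left one_lt_sq hxx₁
          (mul_pos_of_neg_of_neg (denom_neg le_rfl hy₀y.le) (denom_neg hxx₁.le hy₀y.le))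
  · calc velocitySum x y
        < velocitySum x₀ y := velocitySum_lt_velocitySum_left one_lt_sq hx₀x
          (mul_pos_of_neg_of_neg (denom_neg hxx₁.le hy₀y.le) (denom_neg hx₀x₁ hy₀y.le))
      _ < velocitySum x₀ y₁ := velocitySum_lt_velocitySum_right (sq_lt le_rfl hx₀x₁) hyy₁
          (mul_pos_of_neg_of_neg (denom_neg hx₀x₁ (hy₀y.trans hyy₁).le)
            (denom_neg hx₀x₁ hy₀y.le))

theorem one_lt_mul_velocitySum {a r : K} (ha : a ^ 2 < 1) (har : 1 + a * r < 0) :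
    1 < a * velocitySum r a := by
  rw [velocitySum, mul_comm r a, mul_div_assoc', lt_div_iff_of_neg har]
  linarith

end OrderedField

section Dilation

variable {a r s ε θ h₁ h₂ : ℝ}

/-- The denominator of the relativistic sum of `-a` and `r ⊕ a`, both scaled by `exp s`, when it is
written as a fraction with the numerator `r * (1 - a ^ 2)` independent of `s`. -/
noncomputable def dilationDenom (a r s : ℝ) : ℝ :=
  (1 + a * r) * exp (-s) - a * (r + a) * exp s

theorem velocitySum_mul_exp_mul_exp (har : 1 + a * r ≠ 0) (s : ℝ) :
    velocitySum (-a * exp s) (velocitySum r a * exp s) = r * (1 - a ^ 2) / dilationDenom a r s := by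
  rw [velocitySum_mul_mul _ _ (exp_ne_zero s), ← exp_neg, ← mul_div_mul_left _ _ har,
    velocitySum, mul_comm r a, dilationDenom]
  congr 1 <;> field_simp <;> ring

theorem dilationDenom_eq_mul (har : 1 + a * r ≠ 0) (s : ℝ) :
    dilationDenom a r s =
      (1 + a * r) * exp (-s) * (1 + -a * exp s * (velocitySum r a * exp s)) := by
  rw [velocitySum, mul_comm r a, dilationDenom, exp_neg]
  field_simp
  ring

theorem abs_dilationDenom_sub_le (ha : a ^ 2 ≤ 1) (har : 1 + a * r ≤ 0) (hs : |s| ≤ 1) :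
    |dilationDenom a r s - (1 - a ^ 2)| ≤ 4 * |a * r| * |s| := by
  have exp_neg_sub : |exp (-s) - 1| ≤ 2 * |s| := by
    simpa only [abs_neg] using abs_exp_sub_one_le (x := -s) (by rwa [abs_neg])
  calc |dilationDenom a r s - (1 - a ^ 2)|
      = |(1 + a * r) * (exp (-s) - 1) - a * (r + a) * (exp s - 1)| := by
        rw [dilationDenom]; congr 1; ring
    _ ≤ |1 + a * r| * |exp (-s) - 1| + |a * (r + a)| * |exp s - 1| := by
        rw [← abs_mul, ← abs_mul]; exact abs_sub _ _
    _ ≤ |1 + a * r| * (2 * |s|) + |a * (r + a)| * (2 * |s|) := by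
        gcongr; exact abs_exp_sub_one_le hs
    _ = (-2 * (a * r) - 1 - a ^ 2) * (2 * |s|) := by
        rw [abs_of_nonpos har, abs_of_nonpos (by linarith : a * (r + a) ≤ 0)]; ring
    _ ≤ (-2 * (a * r)) * (2 * |s|) := by gcongr; linarith [sq_nonneg a]
    _ = 4 * |a * r| * |s| := by rw [abs_of_neg (by linarith : a * r < 0)]; ring

theorem velocitySum_mem_Ioo_of_dilationDenom_pos (ha₀ : 0 < a) (har : 1 + a * r < 0) (hε : 0 < ε)
    (haε : a < exp (-ε)) (hD : 0 < dilationDenom a r (-ε))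
    (hh₁ : h₁ ∈ Ioo (-a * exp ε) (-a * exp (-ε)))
    (hh₂ : h₂ ∈ Ioo (velocitySum r a * exp (-ε)) (velocitySum r a * exp ε)) :
    velocitySum h₁ h₂ ∈ Ioo (r * (1 - a ^ 2) / dilationDenom a r (-ε))
      (r * (1 - a ^ 2) / dilationDenom a r ε) := by
  have ha₁ : a < 1 := haε.trans (exp_lt_one_iff.2 (neg_neg_of_pos hε))
  have one_lt : 1 < a * velocitySum r a :=
    one_lt_mul_velocitySum (pow_lt_one₀ ha₀.le ha₁ two_ne_zero) har
  rw [← velocitySum_mul_exp_mul_exp har.ne, ← velocitySum_mul_exp_mul_exp har.ne]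
  refine velocitySum_mem_Ioo ?_ ?_ ?_ hh₁ hh₂
  · rw [exp_neg, lt_inv_comm₀ ha₀ (exp_pos ε), inv_eq_one_div, lt_div_iff₀' ha₀] at haε
    linarith
  · have : 0 < velocitySum r a := pos_of_mul_pos_right (one_pos.trans one_lt) ha₀.le
    calc 1 < velocitySum r a * a := by rwa [mul_comm]
      _ < velocitySum r a * exp (-ε) := by gcongr
  · rw [dilationDenom_eq_mul har.ne] at hD
    exact neg_of_mul_pos_right hD (mul_neg_of_neg_of_pos har (exp_pos _)).le

theorem velocitySum_mem_Ioo_div (ha₀ : 0 < a) (ha₁ : a < 1) (har : 1 + a * r < 0) (hε : 0 < ε)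
    (hεθ : 4 * |a * r| * ε ≤ (1 - a ^ 2) * θ) (hθ : θ < 1)
    (hh₁ : h₁ ∈ Ioo (-a * exp ε) (-a * exp (-ε)))
    (hh₂ : h₂ ∈ Ioo (velocitySum r a * exp (-ε)) (velocitySum r a * exp ε)) :
    velocitySum h₁ h₂ ∈ Ioo (r / (1 - θ)) (r / (1 + θ)) := by
  have hr : r < 0 := neg_of_mul_neg_right (by linarith) ha₀.le
  have hc : 0 < 1 - a ^ 2 := sub_pos.2 (pow_lt_one₀ ha₀.le ha₁ two_ne_zero)
  have hθ₀ : 0 ≤ θ := nonneg_of_mul_nonneg_right (le_trans (by positivity) hεθ) hc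
  have hεa : 4 * ε ≤ 1 - a ^ 2 := by
    have : 1 ≤ |a * r| := by rw [abs_of_neg (by linarith)]; linarith
    calc 4 * ε ≤ 4 * |a * r| * ε := by nlinarith
      _ ≤ (1 - a ^ 2) * θ := hεθ
      _ ≤ 1 - a ^ 2 := mul_le_of_le_one_right hc.le hθ.le
  have haε : a < exp (-ε) :=
    calc a < 1 - ε := by nlinarith
      _ ≤ exp (-ε) := one_sub_le_exp_neg ε
  have denom_bounds {s : ℝ} (hs : |s| = ε) :
      (1 - a ^ 2) * (1 - θ) ≤ dilationDenom a r s ∧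
        dilationDenom a r s ≤ (1 - a ^ 2) * (1 + θ) := by
    have := abs_le.1 ((abs_dilationDenom_sub_le (s := s) (by linarith) har.le
      (by linarith [sq_nonneg a])).trans (hs ▸ hεθ))
    constructor <;> linarith
  have lower := (denom_bounds (by rw [abs_neg, abs_of_pos hε])).1
  obtain ⟨pos, upper⟩ := denom_bounds (abs_of_pos hε)
  have hcθ : 0 < (1 - a ^ 2) * (1 - θ) := mul_pos hc (sub_pos.2 hθ)
  refine Ioo_subset_Ioo ?_ ?_ (velocitySum_mem_Ioo_of_dilationDenom_pos ha₀ har hε haε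
    (hcθ.trans_le lower) hh₁ hh₂)
  · rw [div_le_div_iff₀ (sub_pos.2 hθ) (hcθ.trans_le lower), mul_assoc]
    exact mul_le_mul_of_nonpos_left lower hr.le
  · rw [div_le_div_iff₀ (hcθ.trans_le pos) (by linarith), mul_assoc]
    exact mul_le_mul_of_nonpos_left upper hr.le

end Dilation

theorem one_add_mul_log_le_rpow {x : ℝ} (hx : 0 < x) (s : ℝ) : 1 + s * log x ≤ x ^ s := by
  rw [rpow_def_of_pos hx, mul_comm (log x), add_comm]
  exact add_one_le_exp _

theorem rpow_mul_rpow_mul_div_rpow {x y s s' t t' u : ℝ} (hx : 0 < x) (hy : 0 < y)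
    (hs : s = s' + u) (ht : t' = t + u) : x ^ s * y ^ t * (y / x) ^ u = x ^ s' * y ^ t' := by
  have : x ^ u ≠ 0 := (rpow_pos_of_pos hx u).ne'
  rw [div_rpow hy.le hx.le, hs, ht, rpow_add hx, rpow_add hy]
  field_simp

theorem lt_rpow_mul_rpow {x y s t : ℝ} (hx : 0 < x) (hxy : x < y) (ht : 0 < t) (hst : s + t = 1) :
    x < x ^ s * y ^ t :=
  calc x = x ^ s * x ^ t := by rw [← rpow_add hx, hst, rpow_one]
    _ < x ^ s * y ^ t := by gcongr

theorem neg_abs_rpow_mul_abs_rpow_lt {p q s t : ℝ} (hqp : q < p) (hp : p < 0) (ht : 0 < t)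
    (hst : s + t = 1) : -(|p| ^ s * |q| ^ t) < p := by
  rw [abs_of_neg hp, abs_of_neg (hqp.trans hp), neg_lt]
  exact lt_rpow_mul_rpow (neg_pos.2 hp) (neg_lt_neg hqp) ht hst

theorem stmt15_general {p q r ε h₁ h₂ : ℝ} (hqp : q < p) (hp : p < 0) (hr : r < -2)
    (hr1 : -(|p| ^ ((4 : ℝ) / 9) * |q| ^ ((5 : ℝ) / 9)) < r)
    (hr2 : r < -(|p| ^ ((5 : ℝ) / 9) * |q| ^ ((4 : ℝ) / 9)))
    (hε1 : 0 < ε) (hε2 : ε ≤ (100 * |r|)⁻¹ * min (log (q / p)) 1)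
    (hh1l : -(1 / 2) * exp ε < h₁) (hh1r : h₁ < -(1 / 2) * exp (-ε))
    (hh2l : (2 * r + 1) / (2 + r) * exp (-ε) < h₂)
    (hh2r : h₂ < (2 * r + 1) / (2 + r) * exp ε) :
    -(|p| ^ ((1 : ℝ) / 3) * |q| ^ ((2 : ℝ) / 3)) < velocitySum h₁ h₂ ∧
      velocitySum h₁ h₂ < -(|p| ^ ((2 : ℝ) / 3) * |q| ^ ((1 : ℝ) / 3)) := by
  have hP : 0 < |p| := abs_pos.2 hp.ne
  have hQ : 0 < |q| := abs_pos.2 (hqp.trans hp).ne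
  have hlog : log (q / p) = log (|q| / |p|) := by rw [← abs_div, log_abs]
  rw [hlog] at hε2
  set m := min (log (|q| / |p|)) 1
  set ρ := (|q| / |p|) ^ ((1 : ℝ) / 9)
  have hm₁ : m ≤ 1 := min_le_right _ _
  have hεm : 100 * |r| * ε ≤ m := by
    rwa [inv_mul_eq_div, le_div_iff₀' (by rw [abs_of_neg] <;> linarith)] at hε2
  have hm₀ : 0 ≤ m := le_trans (by positivity) hεm
  have hρ : 1 + m / 9 ≤ ρ := by
    linarith [one_add_mul_log_le_rpow (div_pos hQ hP) (1 / 9), min_le_left (log (|q| / |p|)) 1]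
  have gap_above : |p| ^ ((4 : ℝ) / 9) * |q| ^ ((5 : ℝ) / 9) * ρ =
      |p| ^ ((1 : ℝ) / 3) * |q| ^ ((2 : ℝ) / 3) :=
    rpow_mul_rpow_mul_div_rpow hP hQ (by norm_num) (by norm_num)
  have gap_below : |p| ^ ((2 : ℝ) / 3) * |q| ^ ((1 : ℝ) / 3) * ρ =
      |p| ^ ((5 : ℝ) / 9) * |q| ^ ((4 : ℝ) / 9) :=
    rpow_mul_rpow_mul_div_rpow hP hQ (by norm_num) (by norm_num)
  rw [← velocitySum_one_half] at hh2l hh2r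
  obtain ⟨lower, upper⟩ : velocitySum h₁ h₂ ∈ Ioo (r / (1 - m / 10)) (r / (1 + m / 10)) :=
    velocitySum_mem_Ioo_div (by norm_num) (by norm_num) (by linarith) hε1
      (by rw [abs_mul, abs_of_pos one_half_pos]; linarith) (by linarith) ⟨hh1l, hh1r⟩ ⟨hh2l, hh2r⟩
  constructor
  · have hρ' : 1 ≤ ρ * (1 - m / 10) := by nlinarith
    calc -(|p| ^ ((1 : ℝ) / 3) * |q| ^ ((2 : ℝ) / 3))
        = -(|p| ^ ((4 : ℝ) / 9) * |q| ^ ((5 : ℝ) / 9)) * ρ := by rw [← gap_above, neg_mul]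
      _ ≤ r * ρ := by gcongr
      _ ≤ r / (1 - m / 10) := by rw [le_div_iff₀ (by linarith)]; nlinarith
      _ < velocitySum h₁ h₂ := lower
  · refine upper.trans_le ?_
    rw [div_le_iff₀ (by linarith)]
    calc r ≤ -(|p| ^ ((2 : ℝ) / 3) * |q| ^ ((1 : ℝ) / 3) * ρ) := by rw [gap_below]; exact hr2.le
      _ ≤ -(|p| ^ ((2 : ℝ) / 3) * |q| ^ ((1 : ℝ) / 3)) * (1 + m / 10) := by
        rw [neg_mul]; gcongr; linarith

/-- Technical lemma: for `q < p ≤ −4`, `−|p|^{4/9}|q|^{5/9} < r < −|p|^{5/9}|q|^{4/9}`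
and `0 < ε ≤ (100|r|)⁻¹ · min (ln(q/p)) 1`, if
`−(1/2)e^ε < h₁ < −(1/2)e^{−ε}` and `((2r+1)/(2+r))e^{−ε} < h₂ < ((2r+1)/(2+r))e^ε`,
then `−|p|^{1/3}|q|^{2/3} < (h₁+h₂)/(1+h₁h₂) < −|p|^{2/3}|q|^{1/3}`. -/
theorem stmt15 (p q r ε h₁ h₂ : ℝ)
    (hqp : q < p) (hp : p ≤ -4)
    (hr1 : -(|p| ^ ((4 : ℝ) / 9) * |q| ^ ((5 : ℝ) / 9)) < r)
    (hr2 : r < -(|p| ^ ((5 : ℝ) / 9) * |q| ^ ((4 : ℝ) / 9)))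
    (hε1 : 0 < ε) (hε2 : ε ≤ (100 * |r|)⁻¹ * min (Real.log (q / p)) 1)
    (hh1l : -(1 / 2) * Real.exp ε < h₁) (hh1r : h₁ < -(1 / 2) * Real.exp (-ε))
    (hh2l : (2 * r + 1) / (2 + r) * Real.exp (-ε) < h₂)
    (hh2r : h₂ < (2 * r + 1) / (2 + r) * Real.exp ε) :
    -(|p| ^ ((1 : ℝ) / 3) * |q| ^ ((2 : ℝ) / 3)) < (h₁ + h₂) / (1 + h₁ * h₂) ∧
    (h₁ + h₂) / (1 + h₁ * h₂) < -(|p| ^ ((2 : ℝ) / 3) * |q| ^ ((1 : ℝ) / 3)) := by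
  have hr : r < p := hr2.trans <|
    neg_abs_rpow_mul_abs_rpow_lt hqp (by linarith) (by norm_num) (by norm_num)
  exact stmt15_general hqp (by linarith) (by linarith) hr1 hr2 hε1 hε2 hh1l hh1r hh2l hh2r
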